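/- Let (l,m,k) be an admissible triple with r = (l+m−k)/2. Then, as N → ∞, 1 − θ_{q(N)}(k,l,m)/([k+1]_{q(N)}·N^r) = O(N^{−2}); consequently √(1 − θ_{q(N)}(k,l,m)/([k+1]_{q(N)}·N^r)) = O(N^{−1}). -/

import Mathlib

open scoped BigOperators
open Asymptotics Filter

/-- `q(N) = 2/(N + √(N²−4))`, so that `0 < q ≤ 1` and `q + q⁻¹ = N` for `N ≥ 2`. -/
noncomputable def qpar (N : ℕ) : ℝ := 2 / (N + Real.sqrt ((N : ℝ) ^ 2 - 4))

/-- The quantum integer `[n]_q = q^{n−1} + q^{n−3} + ⋯ + q^{−(n−1)}` (and `[0]_q = 0`). -/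
noncomputable def qint (N n : ℕ) : ℝ :=
  ∑ j ∈ Finset.range n, qpar N ^ ((n : ℤ) - 1 - 2 * (j : ℤ))

/-- The quantum factorial `[n]_q! = [n]_q·[n−1]_q·⋯·[1]_q`, with `[0]_q! = 1`. -/
noncomputable def qfact (N n : ℕ) : ℝ := ∏ i ∈ Finset.range n, qint N (i + 1)

/-- The theta-net `θ_q(k,l,m)` of an admissible triple, with `r = (l+m−k)/2`. -/
noncomputable def thetaNet (N k l m r : ℕ) : ℝ :=
  (qfact N r * qfact N (l - r) * qfact N (m - r) * qfact N (k + r + 1)) /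
    (qfact N l * qfact N m * qfact N k)

lemma qpar_pos (N : ℕ) (hN : 2 ≤ N) : 0 < qpar N := by
  unfold qpar
  have : (0:ℝ) < N := by exact_mod_cast (by omega : 0 < N)
  positivity

lemma qpar_add_inv (N : ℕ) (hN : 2 ≤ N) : (N : ℝ) = qpar N + (qpar N)⁻¹ := by
  unfold qpar
  have h2 : (2:ℝ) ≤ N := by exact_mod_cast hN
  have hs : Real.sqrt ((N : ℝ) ^ 2 - 4) ^ 2 = (N : ℝ) ^ 2 - 4 := Real.sq_sqrt (by nlinarith)
  have h0 := Real.sqrt_nonneg ((N : ℝ) ^ 2 - 4)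
  have h1 : (N : ℝ) + Real.sqrt ((N : ℝ) ^ 2 - 4) ≠ 0 := by positivity
  field_simp
  nlinarith

lemma qint_rec (N n : ℕ) (hN : 2 ≤ N) :
    qint N (n + 2) = N * qint N (n + 1) - qint N n := by
  have hq : qpar N ≠ 0 := (qpar_pos N hN).ne'
  have e : (N : ℝ) * qint N (n + 1) =
      (∑ j ∈ Finset.range (n+1), qpar N ^ ((n : ℤ) + 1 - 2 * (j : ℤ))) +
      ∑ j ∈ Finset.range (n+1), qpar N ^ ((n : ℤ) - 1 - 2 * (j : ℤ)) := by
    rw [qpar_add_inv N hN, qint, Finset.mul_sum, ← Finset.sum_add_distrib]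
    refine Finset.sum_congr rfl fun j _ => ?_
    rw [add_mul, ← zpow_one_add₀ hq]
    rw [← zpow_neg_one (qpar N)]
    rw [← zpow_add₀ hq]
    push_cast
    congr 2 <;> ring
  rw [e, Finset.sum_range_succ (n := n) (f := fun j : ℕ => qpar N ^ ((n : ℤ) - 1 - 2 * (j : ℤ)))]
  unfold qint
  rw [Finset.sum_range_succ (n := n+1)]
  have h1 : (((n + 2 : ℕ) : ℤ) - 1) = (n : ℤ) + 1 := by push_cast; ring
  have h2 : ((n : ℤ) + 1 - 2 * ((n+1 : ℕ) : ℤ)) = (n : ℤ) - 1 - 2 * (n : ℤ) := by push_cast; ring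
  rw [h1, h2]
  ring

/-- `f N = N^d (1 + O(N^-2))`. -/
def HasLead (f : ℕ → ℝ) (d : ℤ) : Prop :=
  (fun N : ℕ => f N * (N : ℝ) ^ (-d) - 1) =O[atTop] fun N : ℕ => (N : ℝ) ^ (-2 : ℤ)

lemma small_tendsto : Tendsto (fun N : ℕ => (N : ℝ) ^ (-2 : ℤ)) atTop (nhds 0) :=
  (tendsto_zpow_atTop_zero (by norm_num)).comp tendsto_natCast_atTop_atTop

lemma HasLead.tendsto {f : ℕ → ℝ} {d : ℤ} (h : HasLead f d) :
    Tendsto (fun N : ℕ => f N * (N : ℝ) ^ (-d)) atTop (nhds 1) := by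
  have := (h.trans_tendsto small_tendsto).add_const 1
  simpa using this

lemma HasLead.mul {f g : ℕ → ℝ} {d e : ℤ} (hf : HasLead f d) (hg : HasLead g e) :
    HasLead (fun N => f N * g N) (d + e) := by
  have hb := hf.tendsto.isBigO_one ℝ
  have h1 := hb.mul hg
  simp only [one_mul] at h1
  refine (h1.add hf).congr' ?_ .rfl
  filter_upwards [eventually_ge_atTop 1] with N hN
  have : (N : ℝ) ≠ 0 := by exact_mod_cast (by omega : N ≠ 0)
  rw [neg_add, zpow_add₀ this]
  ring

lemma HasLead.inv {f : ℕ → ℝ} {d : ℤ} (hf : HasLead f d) :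
    HasLead (fun N => (f N)⁻¹) (-d) := by
  have hb := (hf.tendsto.inv₀ one_ne_zero).isBigO_one ℝ
  have h1 := hb.mul hf.neg_left
  simp only [one_mul] at h1
  refine h1.congr' ?_ .rfl
  filter_upwards [eventually_ge_atTop 1, hf.tendsto.eventually_ne one_ne_zero] with N hN hne
  have h0 := left_ne_zero_of_mul hne
  have : (N : ℝ) ≠ 0 := by exact_mod_cast (by omega : N ≠ 0)
  have h2 : (f N * (N:ℝ) ^ (-d))⁻¹ * (f N * (N:ℝ) ^ (-d)) = 1 := inv_mul_cancel₀ hne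
  have h3 : (f N * (N:ℝ) ^ (-d))⁻¹ = (f N)⁻¹ * (N:ℝ) ^ (- -d) := by
    rw [mul_inv, zpow_neg _ (-d)]
  rw [← h3]
  linear_combination -h2

lemma HasLead.pow (r : ℕ) : HasLead (fun N => (N : ℝ) ^ r) r := by
  refine (isBigO_zero _ _).congr' ?_ .rfl
  filter_upwards [eventually_ge_atTop 1] with N hN
  have : (N : ℝ) ≠ 0 := by exact_mod_cast (by omega : N ≠ 0)
  rw [zpow_neg, zpow_natCast, mul_inv_cancel₀ (by positivity), sub_self]

lemma qint_lead_aux (n : ℕ) : HasLead (fun N => qint N (n + 1)) n ∧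
    (fun N : ℕ => qint N n * (N : ℝ) ^ (1 - n : ℤ)) =O[atTop] fun _ => (1 : ℝ) := by
  induction n with
  | zero =>
    constructor
    · refine (isBigO_zero _ _).congr_left fun N => ?_
      simp [qint]
    · refine (isBigO_zero _ _).congr_left fun N => ?_
      simp [qint]
  | succ n ih =>
    obtain ⟨h1, h2⟩ := ih
    constructor
    · have h3 := h2.mul (isBigO_refl (fun N : ℕ => (N : ℝ) ^ (-2 : ℤ)) atTop)
      simp only [one_mul] at h3
      refine (IsBigO.sub h1 h3).congr' ?_ .rfl
      filter_upwards [eventually_ge_atTop 2] with N hN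
      have h0 : (N : ℝ) ≠ 0 := by exact_mod_cast (by omega : N ≠ 0)
      have e1 : (N:ℝ) ^ (-(n:ℤ)) = N * (N:ℝ) ^ (-((n+1 : ℕ) : ℤ)) := by
        rw [← zpow_one_add₀ h0]; congr 1; push_cast; ring
      have e2 : (N:ℝ) ^ (1 - (n:ℤ)) * (N:ℝ) ^ (-2 : ℤ) = (N:ℝ) ^ (-((n+1 : ℕ) : ℤ)) := by
        rw [← zpow_add₀ h0]; congr 1; push_cast; ring
      rw [mul_assoc, e2, e1, qint_rec N n hN]
      ring
    · refine (h1.tendsto.isBigO_one ℝ).congr_left fun N => ?_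
      congr 2; push_cast; ring

lemma qfact_lead (n : ℕ) : HasLead (fun N => qfact N n) (∑ i ∈ Finset.range n, (i : ℤ)) := by
  induction n with
  | zero =>
    refine (isBigO_zero _ _).congr_left fun N => ?_
    simp [qfact]
  | succ n ih =>
    have := ih.mul (qint_lead_aux n).1
    simpa only [qfact, Finset.prod_range_succ, Finset.sum_range_succ] using this

lemma two_sum (n : ℕ) : 2 * ∑ i ∈ Finset.range n, (i : ℤ) = n * (n - 1) := by
  induction n with
  | zero => simp
  | succ n ih => rw [Finset.sum_range_succ, mul_add, ih]; push_cast; ring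

/-- For an admissible triple `(l,m,k)` with `r = (l+m−k)/2`, as `N → ∞` one has
`1 − θ_q(k,l,m)/([k+1]_q·N^r) = O(N^{−2})`, and consequently
`√(1 − θ_q(k,l,m)/([k+1]_q·N^r)) = O(N^{−1})`. -/
theorem thetaNet_ratio_asymptotics (k l m r : ℕ)
    (hadm : l + m = k + 2 * r) (hrl : r ≤ l) (hrm : r ≤ m) :
    ((fun N : ℕ => 1 - thetaNet N k l m r / (qint N (k + 1) * (N : ℝ) ^ r)) =O[atTop]
      fun N : ℕ => (N : ℝ) ^ (-2 : ℤ)) ∧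
    ((fun N : ℕ =>
        Real.sqrt (1 - thetaNet N k l m r / (qint N (k + 1) * (N : ℝ) ^ r))) =O[atTop]
      fun N : ℕ => (N : ℝ)⁻¹) := by
  have main : ((fun N : ℕ => 1 - thetaNet N k l m r / (qint N (k + 1) * (N : ℝ) ^ r)) =O[atTop]
      fun N : ℕ => (N : ℝ) ^ (-2 : ℤ)) := by
    have H := ((((qfact_lead r).mul (qfact_lead (l - r))).mul (qfact_lead (m - r))).mul
      (qfact_lead (k + r + 1))).mul
      (((qfact_lead l).mul (qfact_lead m)).mul (qfact_lead k)).inv |>.mul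
      ((qint_lead_aux k).1.mul (HasLead.pow r)).inv
    unfold HasLead at H
    refine H.neg_left.congr_left fun N => ?_
    obtain ⟨a, rfl⟩ := Nat.exists_eq_add_of_le hrl
    obtain ⟨b, rfl⟩ := Nat.exists_eq_add_of_le hrm
    obtain rfl : k = a + b := by omega
    simp only [Nat.add_sub_cancel_left]
    have ez : ∀ x : ℤ, 2 * x = 0 → (N : ℝ) ^ (-x) = 1 := by
      intro x hx
      obtain rfl : x = 0 := by omega
      simp
    rw [ez]
    · simp only [thetaNet, Nat.add_sub_cancel_left, div_eq_mul_inv]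
      ring
    · simp only [mul_add, mul_neg, two_sum]
      push_cast
      ring
  refine ⟨main, ?_⟩
  obtain ⟨C, hC⟩ := main.bound
  refine IsBigO.of_bound (Real.sqrt C) ?_
  filter_upwards [hC] with N hN
  rw [Real.norm_of_nonneg (Real.sqrt_nonneg _), Real.norm_of_nonneg (by positivity)]
  have e : (N : ℝ)⁻¹ = Real.sqrt ((N : ℝ) ^ (-2 : ℤ)) := by
    rw [show (N : ℝ) ^ (-2 : ℤ) = ((N : ℝ)⁻¹) ^ 2 by rw [zpow_neg, inv_pow]; rfl,
      Real.sqrt_sq (by positivity)]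
  rw [e, ← Real.sqrt_mul' _ (by positivity)]
  apply Real.sqrt_le_sqrt
  rw [Real.norm_of_nonneg (r := (N : ℝ) ^ (-2 : ℤ)) (by positivity)] at hN
  exact (le_abs_self _).trans hN
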